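/- Let (Ω, F, P) be a probability space and let ρ : Ω → ℝ be measurable with ρ > 0 P-almost everywhere, ρ integrable, and log ρ integrable. If a measurable ξ : Ω → ℝ satisfies ξ > 0 P-almost everywhere, log ξ integrable, ξ·ρ integrable, ∫ ξ·ρ dP = 1, and attains the maximal value ∫ log ξ dP = −∫ log ρ dP, then ξ = ρ⁻¹ P-almost everywhere. (Uniqueness of the log-optimal terminal wealth in Theorem 1.) -/

import Mathlib

/-!
The inequality `log x ≤ x - 1` for `x > 0`, strict unless `x = 1`, is applied at `x = ξ ρ`.
The gap `(ξ ρ - 1) - (log ξ + log ρ)` is a.e. nonnegative, and its integral is `0` by the budget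
constraint and optimality of `ξ`. Hence the gap vanishes a.e., which forces `ξ ρ = 1` a.e.
-/

open MeasureTheory

/-- Uniqueness of the log-optimal terminal wealth (Theorem 1): a budget-feasible
terminal wealth `ξ` attaining the maximal expected log utility `−∫ log ρ dP`
must equal `ρ⁻¹` almost everywhere. -/
theorem log_utility_max_unique {Ω : Type*} [MeasurableSpace Ω] (P : Measure Ω)
    [IsProbabilityMeasure P] (ρ : Ω → ℝ) (hρ_meas : Measurable ρ)
    (hρ_pos : ∀ᵐ ω ∂P, 0 < ρ ω) (hρ_int : Integrable ρ P)
    (hlogρ_int : Integrable (fun ω => Real.log (ρ ω)) P)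
    (ξ : Ω → ℝ) (hξ_meas : Measurable ξ) (hξ_pos : ∀ᵐ ω ∂P, 0 < ξ ω)
    (hlogξ_int : Integrable (fun ω => Real.log (ξ ω)) P)
    (hξρ_int : Integrable (fun ω => ξ ω * ρ ω) P)
    (hbudget : (∫ ω, ξ ω * ρ ω ∂P) = 1)
    (hopt : (∫ ω, Real.log (ξ ω) ∂P) = -∫ ω, Real.log (ρ ω) ∂P) :
    ξ =ᵐ[P] fun ω => (ρ ω)⁻¹ := by
  have hlog_int : Integrable (fun ω => Real.log (ξ ω) + Real.log (ρ ω)) P :=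
    hlogξ_int.add hlogρ_int
  have hsub_int : Integrable (fun ω => ξ ω * ρ ω - 1) P :=
    hξρ_int.sub (integrable_const 1)
  have hgap_int : Integrable
      (fun ω => (ξ ω * ρ ω - 1) - (Real.log (ξ ω) + Real.log (ρ ω))) P :=
    hsub_int.sub hlog_int
  have hgap_nonneg :
      0 ≤ᵐ[P] fun ω => (ξ ω * ρ ω - 1) - (Real.log (ξ ω) + Real.log (ρ ω)) := by
    filter_upwards [hρ_pos, hξ_pos] with ω hρ hξ
    have h := Real.log_le_sub_one_of_pos (mul_pos hξ hρ)
    rw [Real.log_mul hξ.ne' hρ.ne'] at h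
    exact sub_nonneg.mpr h
  have hgap_zero :
      ∫ ω, (ξ ω * ρ ω - 1) - (Real.log (ξ ω) + Real.log (ρ ω)) ∂P = 0 := by
    rw [integral_sub hsub_int hlog_int, integral_sub hξρ_int (integrable_const 1),
      integral_add hlogξ_int hlogρ_int, hbudget, hopt]
    simp
  have hgap_ae := (integral_eq_zero_iff_of_nonneg_ae hgap_nonneg hgap_int).mp hgap_zero
  filter_upwards [hρ_pos, hξ_pos, hgap_ae] with ω hρ hξ hgap
  refine eq_inv_of_mul_eq_one_left ?_
  by_contra hne
  have h := Real.log_lt_sub_one_of_pos (mul_pos hξ hρ) hne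
  rw [Real.log_mul hξ.ne' hρ.ne'] at h
  exact (sub_pos.mpr h).ne' hgap
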